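/- For n = 6, the complex dimension of the diagonal coinvariant ring R_W of the Weyl group W(B_6) satisfies dim_ℂ R_W ≥ 13^6 + 3. -/

import Mathlib

open MvPolynomial

/-- The action of the signed permutation `(ε, σ) ∈ W(Bₙ)` on the polynomial ring
`ℂ[x₁,…,xₙ,y₁,…,yₙ]`, sending `xᵢ ↦ εᵢ x_{σ(i)}` and `yᵢ ↦ εᵢ y_{σ(i)}`. -/
noncomputable def bAct (n : ℕ) (ε : Fin n → ℤˣ) (σ : Equiv.Perm (Fin n)) :
    MvPolynomial (Fin n ⊕ Fin n) ℂ →ₐ[ℂ] MvPolynomial (Fin n ⊕ Fin n) ℂ :=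
  aeval (Sum.elim
    (fun i => (((ε i : ℤ) : ℂ)) • X (Sum.inl (σ i)))
    (fun i => (((ε i : ℤ) : ℂ)) • X (Sum.inr (σ i))))

/-- The ideal `I_W` generated by the `W(Bₙ)`-invariant polynomials of positive degree
(equivalently, by the invariant polynomials with zero constant term). -/
noncomputable def diagIdeal (n : ℕ) : Ideal (MvPolynomial (Fin n ⊕ Fin n) ℂ) :=
  Ideal.span {f | (∀ ε σ, bAct n ε σ f = f) ∧ constantCoeff f = 0}

/-!
Let `M` be the `n`-th tensor power of the irreducible representation `K[x] / (x ^ (2 * n + 1))` of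
the rank-one rational Cherednik algebra; it has dimension `(2 * n + 1) ^ n`. Write `D` for the
Dunkl operators on `M` and `Δ = det (x i ^ (2 * j + 1))`. The linear map `Φ` sending `x ^ a * y ^ b`
to `x ^ a D ^ b Δ` is surjective because `M` is irreducible, and multiplication by a variable
corresponds under `Φ` to an operator on `M` up to terms of lower degree. Invariant polynomials go to
multiples of `Δ`, which spans the antisymmetric tensors that are odd in every variable. Hence an
invariant of positive degree is the leading form of an element of `ker Φ`, and so is everything
homogeneous in `I_W`, which bounds `dim R_W` below by `dim M`.

The bound improves by `n - 3` in the isotypic component of the character `(ε, σ) ↦ ∏ i, ε i`. The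
map `Φ` sends it into the antisymmetric tensors built from the `n + 1` even powers of `x`, a space
of dimension `n + 1`, whereas `R_W` has `n + 1` independent classes of this type in degree `n` and
`n - 3` more in degree `n + 2`, detected by explicit functionals that vanish on the ideal.
-/

section LeadingForms

variable {σ K N : Type*} [CommRing K] [AddCommGroup N] [Module K N]

variable (σ K) in
/-- The polynomials of total degree less than `d`. Unlike for `restrictTotalDegree`, the bound is
strict, so that `d = 0` gives the zero submodule. -/
noncomputable def degreeLT (d : ℕ) : Submodule K (MvPolynomial σ K) :=
  restrictSupport K {s | s.degree < d}

theorem mem_degreeLT {d : ℕ} {f : MvPolynomial σ K} :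
    f ∈ degreeLT σ K d ↔ ∀ s, coeff s f ≠ 0 → s.degree < d := by
  simp only [degreeLT, mem_restrictSupport_iff, Set.subset_def, Finset.mem_coe, mem_support_iff,
    Set.mem_ofPred_eq]

theorem degreeLT_mono {d e : ℕ} (h : d ≤ e) : degreeLT σ K d ≤ degreeLT σ K e :=
  restrictSupport_mono K fun _ hs => lt_of_lt_of_le hs h

theorem mem_degreeLT_totalDegree_succ (f : MvPolynomial σ K) :
    f ∈ degreeLT σ K (f.totalDegree + 1) :=
  fun _ hs => Nat.lt_succ_of_le (le_totalDegree hs)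

theorem homogeneousComponent_mem_degreeLT_succ (d : ℕ) (f : MvPolynomial σ K) :
    homogeneousComponent d f ∈ degreeLT σ K (d + 1) := by
  refine mem_degreeLT.2 fun s hs => ?_
  rw [coeff_homogeneousComponent] at hs
  split_ifs at hs <;> simp_all

theorem X_mul_mem_degreeLT_succ (v : σ) {d : ℕ} {f : MvPolynomial σ K} (hf : f ∈ degreeLT σ K d) :
    X v * f ∈ degreeLT σ K (d + 1) := by
  have hX : X v ∈ restrictSupport K ({Finsupp.single v 1} : Set (σ →₀ ℕ)) :=
    (monomial_mem_restrictSupport K).2 (Or.inl rfl)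
  have hmul := Submodule.mul_mem_mul hX hf
  rw [degreeLT, ← restrictSupport_add] at hmul
  refine restrictSupport_mono K ?_ hmul
  rintro _ ⟨s, rfl, t, ht, rfl⟩
  simpa [add_comm 1] using ht

theorem monomial_mem_degreeLT {d : ℕ} {s : σ →₀ ℕ} (hs : s.degree < d) (c : K) :
    monomial s c ∈ degreeLT σ K d :=
  (monomial_mem_restrictSupport K).2 (Or.inl hs)

theorem sub_homogeneousComponent_mem_degreeLT {d : ℕ} {f : MvPolynomial σ K}
    (hf : f ∈ degreeLT σ K (d + 1)) : f - homogeneousComponent d f ∈ degreeLT σ K d := by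
  refine mem_degreeLT.2 fun s hs => ?_
  rw [coeff_sub, coeff_homogeneousComponent] at hs
  split_ifs at hs with h
  · simp at hs
  · have := mem_degreeLT.1 hf s (by simpa using hs)
    omega

/-- The polynomials all of whose homogeneous components are leading forms of elements of the kernel
of `Φ`: each component has the same image as some polynomial of smaller degree. -/
noncomputable def leadingForms (Φ : MvPolynomial σ K →ₗ[K] N) : Submodule K (MvPolynomial σ K) :=
  ⨅ d, ((degreeLT σ K d).map Φ).comap (Φ ∘ₗ homogeneousComponent d)

theorem mem_leadingForms {Φ : MvPolynomial σ K →ₗ[K] N} {f : MvPolynomial σ K} :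
    f ∈ leadingForms Φ ↔ ∀ d, Φ (homogeneousComponent d f) ∈ (degreeLT σ K d).map Φ := by
  simp [leadingForms]

variable {Φ : MvPolynomial σ K →ₗ[K] N}

theorem map_degreeLT_le_of_sup_eq_top {s : Set (σ →₀ ℕ)} {L : Submodule K (MvPolynomial σ K)}
    (hL : L ≤ leadingForms Φ) (hs : restrictSupport K s ⊔ L = ⊤) (d : ℕ) :
    (degreeLT σ K d).map Φ ≤ (restrictSupport K s).map Φ := by
  induction d with
  | zero =>
    rintro _ ⟨f, hf, rfl⟩
    have : f = 0 := by
      ext m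
      by_contra hm
      exact Nat.not_lt_zero _ (mem_degreeLT.1 hf m hm)
    simp [this]
  | succ d ih =>
    rintro _ ⟨f, hf, rfl⟩
    obtain ⟨c, hc, v, hv, hcv⟩ := Submodule.mem_sup.1 (hs ▸ Submodule.mem_top : f ∈ _ ⊔ L)
    have hlow : Φ (f - homogeneousComponent d f) ∈ (restrictSupport K s).map Φ :=
      ih ⟨_, sub_homogeneousComponent_mem_degreeLT hf, rfl⟩
    have hv' : Φ (homogeneousComponent d v) ∈ (restrictSupport K s).map Φ :=
      ih (mem_leadingForms.1 (hL hv) d)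
    have hc' : homogeneousComponent d c ∈ restrictSupport K s :=
      fun m hm => hc (support_homogeneousComponent d c ▸ Finset.filter_subset _ _ <| hm)
    have hsplit : Φ f = Φ (f - homogeneousComponent d f) +
        (Φ (homogeneousComponent d c) + Φ (homogeneousComponent d v)) := by
      rw [← map_add, ← map_add, ← map_add, hcv, sub_add_cancel]
    rw [hsplit]
    exact add_mem hlow (add_mem ⟨_, hc', rfl⟩ hv')

/-- The operators `T v` make the linear map `Φ` a filtered analogue of a module homomorphism:
`T v` intertwines with multiplication by `X v` up to images of polynomials of lower degree. -/
def IntertwinesUpToLowerDegree (T : σ → Module.End K N) (Φ : MvPolynomial σ K →ₗ[K] N) : Prop :=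
  ∀ v d, ∀ f ∈ degreeLT σ K d, T v (Φ f) - Φ (X v * f) ∈ (degreeLT σ K d).map Φ

theorem homogeneousComponent_succ_X_mul (v : σ) (d : ℕ) (f : MvPolynomial σ K) :
    homogeneousComponent (d + 1) (X v * f) = X v * homogeneousComponent d f := by
  let := gradedAlgebra (σ := σ) (R := K)
  rw [← decomposition.decompose'_apply, ← decomposition.decompose'_apply, add_comm]
  exact DirectSum.coe_decompose_mul_add_of_left_mem (homogeneousSubmodule σ K) (isHomogeneous_X K v)

namespace IntertwinesUpToLowerDegree

variable {T : σ → Module.End K N}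

theorem of_monomial
    (h : ∀ v s, T v (Φ (monomial s 1)) - Φ (X v * monomial s 1) ∈ (degreeLT σ K s.degree).map Φ) :
    IntertwinesUpToLowerDegree T Φ := by
  intro v d
  have hspan : degreeLT σ K d ≤
      ((degreeLT σ K d).map Φ).comap (T v ∘ₗ Φ - Φ ∘ₗ LinearMap.mulLeft K (X v)) := by
    conv_lhs => rw [degreeLT, restrictSupport_eq_span]
    refine Submodule.span_le.2 ?_
    rintro _ ⟨s, hs, rfl⟩
    exact Submodule.map_mono (degreeLT_mono (le_of_lt hs)) (h v s)
  exact fun f hf => hspan hf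

theorem apply_mem_range (hT : IntertwinesUpToLowerDegree T Φ) (v : σ) {u : N}
    (hu : u ∈ LinearMap.range Φ) : T v u ∈ LinearMap.range Φ := by
  obtain ⟨f, rfl⟩ := hu
  obtain ⟨r, -, hr⟩ := hT v _ f (mem_degreeLT_totalDegree_succ f)
  exact ⟨r + X v * f, by rw [map_add, hr, sub_add_cancel]⟩

theorem X_mul_mem_leadingForms (hT : IntertwinesUpToLowerDegree T Φ) (v : σ)
    {f : MvPolynomial σ K} (hf : f ∈ leadingForms Φ) : X v * f ∈ leadingForms Φ := by
  refine mem_leadingForms.2 fun d => ?_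
  cases d with
  | zero => simp [homogeneousComponent_zero, ← constantCoeff_eq, zero_mem]
  | succ d =>
    obtain ⟨r, hr, hΦr⟩ := mem_leadingForms.1 hf d
    have hker : Φ (homogeneousComponent d f - r) = 0 := by rw [map_sub, hΦr, sub_self]
    have hdeg : homogeneousComponent d f - r ∈ degreeLT σ K (d + 1) :=
      sub_mem (homogeneousComponent_mem_degreeLT_succ d f) (degreeLT_mono d.le_succ hr)
    have hlow : -Φ (X v * (homogeneousComponent d f - r)) ∈ (degreeLT σ K (d + 1)).map Φ := by
      simpa [hker] using hT v (d + 1) _ hdeg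
    have hXr : Φ (X v * r) ∈ (degreeLT σ K (d + 1)).map Φ :=
      ⟨_, X_mul_mem_degreeLT_succ v hr, rfl⟩
    rw [homogeneousComponent_succ_X_mul]
    simpa [mul_sub] using sub_mem hXr hlow

theorem span_le_leadingForms (hT : IntertwinesUpToLowerDegree T Φ) {S : Set (MvPolynomial σ K)}
    (hS : S ⊆ leadingForms Φ) :
    (Ideal.span S).restrictScalars K ≤ leadingForms Φ := by
  intro f hf
  refine Submodule.span_induction (fun f hf => hS hf) (zero_mem _) (fun _ _ _ _ => add_mem)
    (fun p f _ hf => ?_) hf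
  induction p using MvPolynomial.induction_on with
  | C a => simpa [← smul_eq_C_mul] using Submodule.smul_mem _ a hf
  | add p q hp hq => simpa [add_mul] using add_mem hp hq
  | mul_X p v hp => simpa [mul_comm p, mul_assoc] using hT.X_mul_mem_leadingForms v hp

end IntertwinesUpToLowerDegree

end LeadingForms

section Dimension

variable {σ K N Q : Type*} [Field K] [AddCommGroup N] [Module K N] [AddCommGroup Q] [Module K Q]

theorem exists_finset_span_sup_ker_eq_top {ι E : Type*} [AddCommGroup E] [Module K E]
    [Module.Finite K Q] {b : ι → E} (hb : Submodule.span K (Set.range b) = ⊤) (q : E →ₗ[K] Q) :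
    ∃ s : Finset ι, s.card ≤ Module.finrank K Q ∧
      Submodule.span K (b '' s) ⊔ LinearMap.ker q = ⊤ := by
  obtain ⟨κ, a, ha, hspan, hli⟩ := exists_linearIndependent' K (q ∘ b)
  have : Fintype κ := @Fintype.ofFinite κ hli.finite
  refine ⟨Finset.univ.map ⟨a, ha⟩, by simpa using hli.fintype_card_le_finrank, ?_⟩
  have himage : (Submodule.span K (b '' Set.range a)).map q = LinearMap.range q := by
    rw [Submodule.map_span, ← Set.range_comp, ← Set.range_comp, ← Function.comp_assoc, hspan,
      Set.range_comp, ← Submodule.map_span, hb, Submodule.map_top]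
  rw [Finset.coe_map, Function.Embedding.coeFn_mk, Finset.coe_univ, Set.image_univ,
    ← Submodule.comap_map_eq, himage]
  exact eq_top_iff.2 fun x _ => LinearMap.mem_range_self q x

theorem finrank_le_of_ker_le_leadingForms [Module.Finite K Q]
    {Φ : MvPolynomial σ K →ₗ[K] N} (hΦ : Function.Surjective Φ)
    {q : MvPolynomial σ K →ₗ[K] Q} (hq : LinearMap.ker q ≤ leadingForms Φ) :
    Module.finrank K N ≤ Module.finrank K Q := by
  obtain ⟨s, hcard, hs⟩ :=
    exists_finset_span_sup_ker_eq_top (basisMonomials σ K).span_eq q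
  rw [coe_basisMonomials, ← restrictSupport_eq_span] at hs
  have htop : (restrictSupport K (s : Set (σ →₀ ℕ))).map Φ = ⊤ := by
    refine eq_top_iff.2 fun u _ => ?_
    obtain ⟨f, rfl⟩ := hΦ u
    exact map_degreeLT_le_of_sup_eq_top hq hs _ ⟨f, mem_degreeLT_totalDegree_succ f, rfl⟩
  calc Module.finrank K N = Module.finrank K ((restrictSupport K (s : Set (σ →₀ ℕ))).map Φ) := by
        rw [htop, finrank_top]
    _ ≤ Module.finrank K (restrictSupport K (s : Set (σ →₀ ℕ))) :=
        have := Module.Finite.of_basis (basisRestrictSupport K (s : Set (σ →₀ ℕ)))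
        Submodule.finrank_map_le _ _
    _ = s.card := by
        simpa using Module.finrank_eq_card_basis (basisRestrictSupport K (s : Set (σ →₀ ℕ)))
    _ ≤ Module.finrank K Q := hcard

end Dimension

section CoordinateAction

variable {K ι κ : Type*} [CommRing K] [DecidableEq κ]

variable (K ι κ) in
/-- The word `k` of the tensor `rowDet B` is the determinant of the matrix whose `i`-th row is the
row of `B i` with index `k i`; so `rowDet` turns the columns of the `B i` into one antisymmetrised
tensor. -/
noncomputable def rowDet [Fintype κ] : MultilinearMap K (fun _ : κ => Matrix ι κ K) ((κ → ι) → K) :=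
  MultilinearMap.pi fun k =>
    (Matrix.detRowAlternating (n := κ) (R := K)).toMultilinearMap.compLinearMap
      fun i => LinearMap.proj (k i)

theorem rowDet_apply [Fintype κ] (B : κ → Matrix ι κ K) (k : κ → ι) :
    rowDet K ι κ B k = (Matrix.of fun i => B i (k i)).det := rfl

theorem rowDet_comp_perm [Fintype κ] (B : κ → Matrix ι κ K) (k : κ → ι) (σ : Equiv.Perm κ) :
    rowDet K ι κ (B ∘ σ) (k ∘ σ) = Equiv.Perm.sign σ • rowDet K ι κ B k :=
  Matrix.detRowAlternating.map_perm (fun i => B i (k i)) σ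

variable [Fintype ι]

/-- A square matrix acting on the `i`-th tensor factor of `(K ^ ι) ^ ⊗ κ`, the latter being
encoded as the functions on the index words `κ → ι`. -/
noncomputable def coordAct [DecidableEq ι] (i : κ) :
    Matrix ι ι K →ₐ[K] Module.End K ((κ → ι) → K) :=
  AlgHom.ofLinearMap
    (LinearMap.mk₂ K (fun A u k => A.mulVec (fun l => u (Function.update k i l)) (k i))
      (fun A B u => by ext k; simp [Matrix.add_mulVec])
      (fun c A u => by ext k; simp [Matrix.smul_mulVec])
      (fun A u v => by ext k; exact congrFun (A.mulVec_add _ _) _)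
      (fun c A u => by ext k; exact congrFun (A.mulVec_smul c _) _))
    (by ext; simp)
    (fun A B => by ext; simp [← Matrix.mulVec_mulVec])

theorem coordAct_apply [DecidableEq ι] (i : κ) (A : Matrix ι ι K) (u : (κ → ι) → K) (k : κ → ι) :
    coordAct i A u k = ∑ l, A (k i) l * u (Function.update k i l) := rfl

variable [DecidableEq ι]

theorem coordAct_single (i : κ) (p q : ι) (u : (κ → ι) → K) (k : κ → ι) :
    coordAct i (Matrix.single p q 1) u k = if k i = p then u (Function.update k i q) else 0 := by
  simp [coordAct_apply, Matrix.single_apply, ite_and, eq_comm]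

theorem coordAct_rowDet [Fintype κ] (i : κ) (A : Matrix ι ι K) (B : κ → Matrix ι κ K) :
    coordAct i A (rowDet K ι κ B) = rowDet K ι κ (Function.update B i (A * B i)) := by
  ext k
  have hrow (l : ι) : (fun j => B j (Function.update k i l j)) =
      Function.update (fun j => B j (k j)) i (B i l) := by
    ext j
    obtain rfl | hj := eq_or_ne j i <;> simp [*]
  have hprod : (fun j => Function.update B i (A * B i) j (k j)) =
      Function.update (fun j => B j (k j)) i (∑ l, A (k i) l • B i l) := by
    ext j
    obtain rfl | hj := eq_or_ne j i <;> simp [*, Matrix.mul_apply]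
  change ∑ l, A (k i) l * Matrix.detRowAlternating (fun j => B j (Function.update k i l j)) =
    Matrix.detRowAlternating fun j => Function.update B i (A * B i) j (k j)
  simp only [hrow, hprod, AlternatingMap.map_update_sum, AlternatingMap.map_update_smul,
    smul_eq_mul]

end CoordinateAction

section Irreducibility

variable {K ι κ : Type*} [Field K] [Fintype ι] [DecidableEq ι] [Finite κ] [DecidableEq κ]

theorem eq_top_of_coordAct_mem {V : Submodule K ((κ → ι) → K)} (hV : V ≠ ⊥)
    (h : ∀ i A, ∀ u ∈ V, coordAct i A u ∈ V) : V = ⊤ := by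
  cases nonempty_fintype κ
  obtain ⟨u, huV, hu⟩ := V.exists_mem_ne_zero_of_ne_bot hV
  obtain ⟨k₀, hk₀⟩ := Function.ne_iff.1 hu
  have hpiecewise (p : κ → ι) (s : Finset κ) :
      (fun k => if ∀ i ∈ s, k i = p i then u (s.piecewise k₀ k) else 0) ∈ V := by
    induction s using Finset.induction_on with
    | empty => simpa using huV
    | insert a s ha ih =>
      convert h a (Matrix.single (p a) (k₀ a) 1) _ ih using 1
      ext k
      have hs : (∀ i ∈ s, Function.update k a (k₀ a) i = p i) ↔ ∀ i ∈ s, k i = p i :=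
        forall₂_congr fun i hi => by rw [Function.update_of_ne (ne_of_mem_of_not_mem hi ha)]
      simp only [coordAct_single, hs, Finset.forall_mem_insert, ite_and,
        Finset.piecewise_insert, Finset.update_piecewise_of_notMem _ _ _ ha]
  have hsingle (p : κ → ι) : Pi.single p 1 ∈ V := by
    refine (V.smul_mem_iff hk₀).1 ?_
    convert hpiecewise p Finset.univ using 1
    ext k
    simp [Pi.single_apply, _root_.funext_iff]
  refine eq_top_iff.2 ((Pi.basisFun K (κ → ι)).span_eq.ge.trans (Submodule.span_le.2 ?_))
  rintro _ ⟨p, rfl⟩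
  simpa using hsingle p

theorem eq_top_of_coordAct_generators_mem {S : Set (Matrix ι ι K)} (hS : Algebra.adjoin K S = ⊤)
    {V : Submodule K ((κ → ι) → K)} (hV : V ≠ ⊥)
    (h : ∀ i, ∀ A ∈ S, ∀ u ∈ V, coordAct i A u ∈ V) : V = ⊤ := by
  refine eq_top_of_coordAct_mem hV fun i A => ?_
  induction (hS ▸ Algebra.mem_top : A ∈ Algebra.adjoin K S) using Algebra.adjoin_induction with
  | mem A hA => exact h i A hA
  | algebraMap c => exact fun u hu => by simpa using V.smul_mem c hu
  | add A B _ _ hA hB => exact fun u hu => by simpa using add_mem (hA u hu) (hB u hu)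
  | mul A B _ _ hA hB => exact fun u hu => by simpa using hA _ (hB u hu)

end Irreducibility

section Antisymmetric

variable {K ι : Type*} [CommRing K] {n : ℕ}

variable (K n) in
/-- The antisymmetric tensors in `(K ^ ι) ^ ⊗ n` supported on words with letters in `T`. -/
def altSupported (T : Finset ι) :
    Submodule K ((Fin n → ι) → K) where
  carrier := {u | (∀ (σ : Equiv.Perm (Fin n)) k, u (k ∘ σ) = Equiv.Perm.sign σ • u k) ∧
    ∀ k, u k ≠ 0 → ∀ i, k i ∈ T}
  zero_mem' := by simp
  add_mem' := by
    rintro u v ⟨hu, hu'⟩ ⟨hv, hv'⟩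
    refine ⟨fun σ k => by simp [hu, hv], fun k hk => ?_⟩
    by_cases h : u k = 0
    · exact hv' k (by simpa [h] using hk)
    · exact hu' k h
  smul_mem' := by
    rintro c u ⟨hu, hu'⟩
    exact ⟨fun σ k => by simp [hu, mul_smul_comm], fun k hk => hu' k (right_ne_zero_of_mul hk)⟩

theorem eq_zero_of_mem_altSupported [IsAddTorsionFree K] [LinearOrder ι] {T : Finset ι}
    {u : (Fin n → ι) → K} (hu : u ∈ altSupported K n T)
    (h : ∀ k : Fin n → ι, StrictMono k → (∀ i, k i ∈ T) → u k = 0) : u = 0 := by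
  ext k
  by_contra hk
  by_cases hinj : Function.Injective k
  · refine hk ?_
    have := h (k ∘ Tuple.sort k)
      ((Tuple.monotone_sort k).strictMono_of_injective (hinj.comp (Tuple.sort k).injective))
      fun i => hu.2 k hk _
    simpa [hu.1, smul_eq_zero_iff_eq] using this
  · obtain ⟨i, j, hij, hne⟩ := Function.not_injective_iff.1 hinj
    have hswap : k ∘ Equiv.swap i j = k := by
      rw [Equiv.comp_swap_eq_update, hij, Function.update_eq_self, ← hij, Function.update_eq_self]
    have := hu.1 (Equiv.swap i j) k
    rw [hswap, Equiv.Perm.sign_swap hne, Units.neg_smul, one_smul, self_eq_neg] at this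
    exact hk this

theorem finrank_altSupported_le [Nontrivial K] [IsAddTorsionFree K] [LinearOrder ι]
    (T : Finset ι) :
    Module.finrank K (altSupported K n T) ≤ T.card.choose n := by
  let restrict : altSupported K n T →ₗ[K] (T.powersetCard n → K) :=
    LinearMap.funLeft K K (fun s i => s.1.orderEmbOfFin (Finset.mem_powersetCard.1 s.2).2 i) ∘ₗ
      Submodule.subtype _
  have hinj : Function.Injective restrict := by
    refine (injective_iff_map_eq_zero _).2 fun u hu => Subtype.ext ?_
    refine eq_zero_of_mem_altSupported u.2 fun k hk hkT => ?_
    have hcard : (Finset.univ.map ⟨k, hk.injective⟩).card = n := by simp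
    have hrestrict := congrFun hu ⟨Finset.univ.map ⟨k, hk.injective⟩,
      Finset.mem_powersetCard.2 ⟨by simpa [Finset.subset_iff] using hkT, hcard⟩⟩
    exact (congrArg u.1 (Finset.orderEmbOfFin_unique hcard (by simp) hk)).trans hrestrict
  simpa using LinearMap.finrank_le_finrank_of_injective hinj

end Antisymmetric

section RankOne

variable (K : Type*) [CommRing K] (n : ℕ)

/-- The scalar by which the rank-one Dunkl operator at parameter `2 * n + 1` sends `x ^ k` to
`x ^ (k - 1)`. It vanishes at `k = 2 * n + 1`, so that `K[x] / (x ^ (2 * n + 1))` is a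
representation. -/
def dunklWeight (k : ℕ) : K := if Even k then k else k - (2 * n + 1)

/-- Multiplication by `x` on `K[x] / (x ^ (2 * n + 1))`, in the basis of the powers of `x`. -/
def raise : Matrix (Fin (2 * n + 1)) (Fin (2 * n + 1)) K :=
  .of fun k l => if (k : ℕ) = l + 1 then 1 else 0

/-- The Dunkl operator on `K[x] / (x ^ (2 * n + 1))`, in the basis of the powers of `x`. -/
def lower : Matrix (Fin (2 * n + 1)) (Fin (2 * n + 1)) K :=
  .of fun k l => if (k : ℕ) + 1 = l then dunklWeight K n l else 0

/-- The reflection `x ↦ -x` on `K[x] / (x ^ (2 * n + 1))`, in the basis of the powers of `x`. -/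
def parity : Matrix (Fin (2 * n + 1)) (Fin (2 * n + 1)) K :=
  .diagonal fun k => (-1) ^ (k : ℕ)

theorem raise_mul_lower :
    raise K n * lower K n = .diagonal fun k => dunklWeight K n k := by
  ext k l
  rw [Matrix.mul_apply]
  induction k using Fin.cases with
  | zero => simp [raise, lower, dunklWeight, Matrix.diagonal_apply]
  | succ k =>
    rw [Finset.sum_eq_single k.castSucc] <;>
      simp [raise, lower, Matrix.diagonal_apply, Fin.ext_iff] <;> grind

theorem lower_mul_raise :
    lower K n * raise K n = .diagonal fun k => dunklWeight K n (k + 1) := by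
  ext k l
  rw [Matrix.mul_apply]
  induction k using Fin.lastCases with
  | last =>
    have hw : dunklWeight K n (2 * n + 1) = 0 := by simp [dunklWeight]
    rw [Finset.sum_eq_zero fun j _ => by simp [lower, j.isLt.ne']]
    simp [Matrix.diagonal_apply, hw]
  | cast k =>
    rw [Finset.sum_eq_single k.succ] <;>
      simp [raise, lower, Matrix.diagonal_apply, Fin.ext_iff]
    grind

theorem lower_mul_raise_eq :
    lower K n * raise K n =
      raise K n * lower K n + 1 - (2 * n + 1 : K) • parity K n := by
  rw [lower_mul_raise, raise_mul_lower]
  ext k l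
  obtain rfl | hkl := eq_or_ne k l
  · obtain hk | hk := Nat.even_or_odd (k : ℕ)
    · simp [parity, dunklWeight, hk, hk.neg_one_pow, Nat.even_add_one]
    · simp [parity, dunklWeight, hk.add_one, Nat.not_even_iff_odd.2 hk, hk.neg_one_pow]
      ring
  · simp [parity, hkl]

theorem parity_mul_raise : parity K n * raise K n = -(raise K n * parity K n) := by
  ext k l
  simp only [parity, raise, Matrix.diagonal_mul, Matrix.mul_diagonal, Matrix.of_apply,
    Matrix.neg_apply]
  split_ifs with h <;> simp [h, pow_succ]

theorem parity_mul_lower : parity K n * lower K n = -(lower K n * parity K n) := by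
  ext k l
  simp only [parity, lower, Matrix.diagonal_mul, Matrix.mul_diagonal, Matrix.of_apply,
    Matrix.neg_apply]
  split_ifs with h <;> [simp [← h, pow_succ, mul_comm]; simp]

variable {K n}

theorem parity_mul_pow_mul {A : Matrix (Fin (2 * n + 1)) (Fin (2 * n + 1)) K}
    (hA : parity K n * A = -(A * parity K n)) {ι : Type*} {F : Matrix (Fin (2 * n + 1)) ι K} {e : K}
    (hF : parity K n * F = e • F) (a : ℕ) :
    parity K n * (A ^ a * F) = ((-1) ^ a * e) • (A ^ a * F) := by
  induction a with
  | zero => simp [hF]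
  | succ a ih =>
    rw [pow_succ', Matrix.mul_assoc A, ← Matrix.mul_assoc, hA, Matrix.neg_mul, Matrix.mul_assoc, ih,
      Matrix.mul_smul, ← neg_smul]
    ring_nf

theorem exists_lower_mul_raise_pow_succ_mul {ι : Type*} {F : Matrix (Fin (2 * n + 1)) ι K} {e : K}
    (hF : parity K n * F = e • F) (a : ℕ) :
    ∃ c : K, lower K n * (raise K n ^ (a + 1) * F) =
      raise K n ^ (a + 1) * (lower K n * F) + c • (raise K n ^ a * F) := by
  have hstep (a : ℕ) : lower K n * (raise K n ^ (a + 1) * F) =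
      raise K n * (lower K n * (raise K n ^ a * F)) +
        (1 - (2 * n + 1) * ((-1) ^ a * e)) • (raise K n ^ a * F) := by
    rw [pow_succ', Matrix.mul_assoc (raise K n), ← Matrix.mul_assoc, lower_mul_raise_eq,
      Matrix.sub_mul, Matrix.add_mul, Matrix.one_mul, Matrix.smul_mul,
      parity_mul_pow_mul (parity_mul_raise K n) hF, smul_smul, sub_smul, one_smul,
      Matrix.mul_assoc, add_sub_assoc]
  induction a with
  | zero => exact ⟨_, by simpa using hstep 0⟩
  | succ a ih =>
    obtain ⟨c, hc⟩ := ih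
    refine ⟨c + (1 - (2 * n + 1) * ((-1) ^ (a + 1) * e)), ?_⟩
    rw [hstep, hc, Matrix.mul_add, Matrix.mul_smul, ← Matrix.mul_assoc (raise K n),
      ← Matrix.mul_assoc (raise K n), ← pow_succ', ← pow_succ', add_smul, add_assoc]

variable (K n) in
theorem raise_mul_single (p : Fin (2 * n)) (q : Fin (2 * n + 1)) :
    raise K n * Matrix.single p.castSucc q 1 = Matrix.single p.succ q 1 := by
  ext k l
  obtain rfl | hl := eq_or_ne q l
  · simp [raise, Matrix.single_apply, Fin.ext_iff, eq_comm]
  · rw [Matrix.mul_single_apply_of_ne _ _ _ _ _ hl.symm, Matrix.single_apply_of_col_ne _ _ hl]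

variable (K n) in
theorem single_mul_lower (p : Fin (2 * n + 1)) (q : Fin (2 * n)) :
    Matrix.single p q.castSucc 1 * lower K n =
      dunklWeight K n (q + 1) • Matrix.single p q.succ 1 := by
  ext k l
  obtain rfl | hk := eq_or_ne p k
  · simp [lower, Matrix.single_apply, Fin.ext_iff]
    grind
  · rw [Matrix.single_mul_apply_of_ne _ _ _ _ _ hk.symm]
    simp [hk]

theorem dunklWeight_succ_ne_zero [CharZero K] (k : Fin (2 * n)) : dunklWeight K n (k + 1) ≠ 0 := by
  unfold dunklWeight
  split_ifs
  · exact_mod_cast Nat.succ_ne_zero k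
  · rw [sub_ne_zero]
    exact_mod_cast (by omega : (k : ℕ) + 1 ≠ 2 * n + 1)

end RankOne

section Generators

variable (K : Type*) [Field K] [CharZero K] (n : ℕ)

theorem single_zero_zero_mem_adjoin :
    Matrix.single 0 0 1 ∈ Algebra.adjoin K {raise K n, lower K n} := by
  let w : Fin (2 * n + 1) → K := fun k => dunklWeight K n k
  have hw : Matrix.diagonalAlgHom K w ∈ Algebra.adjoin K {raise K n, lower K n} := by
    change Matrix.diagonal w ∈ _
    rw [← raise_mul_lower]
    exact mul_mem (Algebra.subset_adjoin (by simp)) (Algebra.subset_adjoin (by simp))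
  have hprod : Pi.single 0 1 = ∏ k : Fin (2 * n), (1 - (w k.succ)⁻¹ • w) := by
    ext l
    induction l using Fin.cases with
    | zero => simp [w, dunklWeight]
    | succ l =>
      rw [Finset.prod_apply, Finset.prod_eq_zero (Finset.mem_univ l)] <;>
        simp [w, dunklWeight_succ_ne_zero]
  rw [← Matrix.diagonal_single, ← Matrix.diagonalAlgHom_apply K, hprod]
  refine (?_ : _ ∈ (Algebra.adjoin K {raise K n, lower K n}).comap (Matrix.diagonalAlgHom K))
  exact prod_mem fun k _ => sub_mem (one_mem _) (Subalgebra.smul_mem (Subalgebra.comap _ _) hw _)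

theorem adjoin_raise_lower_eq_top : Algebra.adjoin K {raise K n, lower K n} = ⊤ := by
  set A := Algebra.adjoin K {raise K n, lower K n}
  have hraise : raise K n ∈ A := Algebra.subset_adjoin (by simp)
  have hlower : lower K n ∈ A := Algebra.subset_adjoin (by simp)
  have hcol (p : Fin (2 * n + 1)) : Matrix.single p 0 1 ∈ A := by
    induction p using Fin.induction with
    | zero => exact single_zero_zero_mem_adjoin K n
    | succ p ih => exact raise_mul_single K n p 0 ▸ mul_mem hraise ih
  have hunit (p q : Fin (2 * n + 1)) : Matrix.single p q 1 ∈ A := by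
    induction q using Fin.induction with
    | zero => exact hcol p
    | succ q ih =>
      refine (A.toSubmodule.smul_mem_iff (dunklWeight_succ_ne_zero (K := K) q)).1 ?_
      exact single_mul_lower K n p q ▸ A.mul_mem ih hlower
  refine eq_top_iff.2 fun M _ => ?_
  rw [Matrix.matrix_eq_sum_single M]
  exact sum_mem fun p _ => sum_mem fun q _ => by simpa using A.smul_mem (hunit p q) (M p q)

end Generators

section DunklMap

variable (K : Type*) [CommRing K] (n : ℕ)

/-- The odd powers of `x` in `K[x] / (x ^ (2 * n + 1))`, as the columns of a matrix. -/
def oddPowers : Matrix (Fin (2 * n + 1)) (Fin n) K :=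
  .of fun k j => if (k : ℕ) = 2 * j + 1 then 1 else 0

/-- The images of the odd powers of `x` under `x ^ a * D ^ b`, with `D` the Dunkl operator. -/
def letterColumns (a b : ℕ) : Matrix (Fin (2 * n + 1)) (Fin n) K :=
  raise K n ^ a * (lower K n ^ b * oddPowers K n)

/-- The linear map `x ^ a * y ^ b ↦ x ^ a * D ^ b * Δ`, where `D i` is the Dunkl operator on the
`i`-th tensor factor of `(K[x] / (x ^ (2 * n + 1))) ^ ⊗ n` and `Δ` is the antisymmetrisation of
`x ⊗ x ^ 3 ⊗ ⋯ ⊗ x ^ (2 * n - 1)`. -/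
noncomputable def dunklMap :
    MvPolynomial (Fin n ⊕ Fin n) K →ₗ[K] ((Fin n → Fin (2 * n + 1)) → K) :=
  (basisMonomials (Fin n ⊕ Fin n) K).constr K fun s =>
    rowDet K (Fin (2 * n + 1)) (Fin n) fun i => letterColumns K n (s (.inl i)) (s (.inr i))

/-- The operators on `(K[x] / (x ^ (2 * n + 1))) ^ ⊗ n` corresponding to the variables: `x i` acts
on the `i`-th tensor factor by multiplication and `y i` by the Dunkl operator. -/
noncomputable def dunklAct :
    Fin n ⊕ Fin n → Module.End K ((Fin n → Fin (2 * n + 1)) → K) :=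
  Sum.elim (fun i => coordAct i (raise K n)) (fun i => coordAct i (lower K n))

variable {K n}

theorem dunklMap_monomial (s : Fin n ⊕ Fin n →₀ ℕ) (c : K) :
    dunklMap K n (monomial s c) = c • rowDet K (Fin (2 * n + 1)) (Fin n)
      fun i => letterColumns K n (s (.inl i)) (s (.inr i)) := by
  have h := (basisMonomials (Fin n ⊕ Fin n) K).constr_basis K (fun s =>
    rowDet K (Fin (2 * n + 1)) (Fin n) fun i => letterColumns K n (s (.inl i)) (s (.inr i))) s
  rw [coe_basisMonomials] at h
  have hc : monomial s c = c • monomial s 1 := by rw [smul_monomial, smul_eq_mul, mul_one]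
  rw [hc, map_smul, dunklMap, h]

theorem dunklMap_monomial_eq_rowDet_update {s t : Fin n ⊕ Fin n →₀ ℕ} {i : Fin n}
    (h : ∀ j ≠ i, t (.inl j) = s (.inl j) ∧ t (.inr j) = s (.inr j)) (c : K) :
    dunklMap K n (monomial t c) = c • rowDet K (Fin (2 * n + 1)) (Fin n)
      (Function.update (fun j => letterColumns K n (s (.inl j)) (s (.inr j))) i
        (letterColumns K n (t (.inl i)) (t (.inr i)))) := by
  rw [dunklMap_monomial]
  congr 2
  ext j : 1
  obtain rfl | hj := eq_or_ne j i
  · rw [Function.update_self]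
  · rw [Function.update_of_ne hj, (h j hj).1, (h j hj).2]

theorem parity_mul_letterColumns (a b : ℕ) :
    parity K n * letterColumns K n a b = (-1 : K) ^ (a + b + 1) • letterColumns K n a b := by
  have hodd : parity K n * oddPowers K n = (-1 : K) • oddPowers K n := by
    ext k j
    by_cases h : (k : ℕ) = 2 * j + 1 <;> simp [parity, oddPowers, h, pow_succ]
  have := parity_mul_pow_mul (parity_mul_raise K n)
    (parity_mul_pow_mul (parity_mul_lower K n) hodd b) a
  rwa [← mul_assoc, ← pow_add, ← pow_succ] at this

theorem exists_lower_mul_letterColumns_succ (a b : ℕ) :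
    ∃ c : K, lower K n * letterColumns K n (a + 1) b =
      letterColumns K n (a + 1) (b + 1) + c • letterColumns K n a b := by
  have hF := parity_mul_letterColumns (K := K) (n := n) 0 b
  simp only [letterColumns, pow_zero, Matrix.one_mul] at hF
  obtain ⟨c, hc⟩ := exists_lower_mul_raise_pow_succ_mul hF a
  exact ⟨c, by rw [letterColumns, hc, ← Matrix.mul_assoc (lower K n), ← pow_succ']; rfl⟩

theorem raise_mul_letterColumns (a b : ℕ) :
    raise K n * letterColumns K n a b = letterColumns K n (a + 1) b := by
  rw [letterColumns, ← Matrix.mul_assoc, ← pow_succ', letterColumns]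

theorem lower_mul_letterColumns_zero (b : ℕ) :
    lower K n * letterColumns K n 0 b = letterColumns K n 0 (b + 1) := by
  simp [letterColumns, ← Matrix.mul_assoc, pow_succ']

theorem coordAct_raise_dunklMap_monomial (i : Fin n) (s : Fin n ⊕ Fin n →₀ ℕ) :
    coordAct i (raise K n) (dunklMap K n (monomial s 1)) =
      dunklMap K n (X (.inl i) * monomial s 1) := by
  rw [X, monomial_mul, one_mul, dunklMap_monomial s, one_smul, coordAct_rowDet,
    raise_mul_letterColumns, dunklMap_monomial_eq_rowDet_update (s := s) (i := i) ?_ 1, one_smul]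
  · simp [add_comm 1]
  · intro j hj
    simp [hj.symm]

theorem exists_coordAct_lower_dunklMap_monomial (i : Fin n) (s : Fin n ⊕ Fin n →₀ ℕ) :
    ∃ r ∈ degreeLT (Fin n ⊕ Fin n) K s.degree,
      coordAct i (lower K n) (dunklMap K n (monomial s 1)) =
        dunklMap K n (X (.inr i) * monomial s 1) + dunklMap K n r := by
  have hX : dunklMap K n (X (.inr i) * monomial s 1) = rowDet K (Fin (2 * n + 1)) (Fin n)
      (Function.update (fun j => letterColumns K n (s (.inl j)) (s (.inr j))) i
        (letterColumns K n (s (.inl i)) (s (.inr i) + 1))) := by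
    rw [X, monomial_mul, one_mul, dunklMap_monomial_eq_rowDet_update (s := s) (i := i) ?_ 1,
      one_smul]
    · simp [add_comm 1]
    · intro j hj
      simp [hj.symm]
  rw [hX, dunklMap_monomial s, one_smul, coordAct_rowDet]
  cases hs : s (.inl i) with
  | zero => exact ⟨0, zero_mem _, by rw [lower_mul_letterColumns_zero, map_zero, add_zero]⟩
  | succ a =>
    obtain ⟨c, hc⟩ := exists_lower_mul_letterColumns_succ (K := K) (n := n) a (s (.inr i))
    have hle : Finsupp.single (.inl i) 1 ≤ s := by simp [hs]
    have hdeg : (s - .single (.inl i) 1).degree < s.degree := by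
      conv_rhs => rw [← tsub_add_cancel_of_le hle]
      simp
    refine ⟨_, monomial_mem_degreeLT hdeg c, ?_⟩
    rw [hc, MultilinearMap.map_update_add, MultilinearMap.map_update_smul,
      dunklMap_monomial_eq_rowDet_update (s := s) (i := i)]
    · simp [hs]
    · intro j hj
      simp [hj.symm]

theorem intertwinesUpToLowerDegree_dunklMap :
    IntertwinesUpToLowerDegree (dunklAct K n) (dunklMap K n) := by
  refine .of_monomial fun v s => ?_
  cases v with
  | inl i =>
    rw [dunklAct, Sum.elim_inl, coordAct_raise_dunklMap_monomial, sub_self]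
    exact zero_mem _
  | inr i =>
    obtain ⟨r, hr, h⟩ := exists_coordAct_lower_dunklMap_monomial (K := K) i s
    exact ⟨r, hr, by rw [dunklAct, Sum.elim_inr, h, add_sub_cancel_left]⟩

theorem dunklMap_one_ne_zero [Nontrivial K] : dunklMap K n 1 ≠ 0 := by
  refine Function.ne_iff.2 ⟨fun i => ⟨2 * i + 1, by omega⟩, ?_⟩
  have hone : (Matrix.of fun i : Fin n => letterColumns K n 0 0 ⟨2 * i + 1, by omega⟩) = 1 := by
    ext i j
    simp [letterColumns, oddPowers, Matrix.one_apply, Fin.ext_iff]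
  rw [MvPolynomial.one_def, dunklMap_monomial]
  simp [rowDet_apply, hone]

theorem odd_of_dunklMap_monomial_apply_ne_zero [IsAddTorsionFree K] {s : Fin n ⊕ Fin n →₀ ℕ}
    {c : K} {k : Fin n → Fin (2 * n + 1)} (h : dunklMap K n (monomial s c) k ≠ 0) (i : Fin n) :
    Odd (s (.inl i) + s (.inr i) + k i) := by
  by_contra hodd
  refine h ?_
  have hrow : letterColumns K n (s (.inl i)) (s (.inr i)) (k i) = 0 := by
    ext j
    have hj := congrFun₂ (parity_mul_letterColumns (K := K) (s (.inl i)) (s (.inr i))) (k i) j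
    rw [parity, Matrix.diagonal_mul, Matrix.smul_apply, smul_eq_mul] at hj
    obtain ⟨h₁, h₂⟩ | ⟨h₁, h₂⟩ : Even (k i : ℕ) ∧ Odd (s (.inl i) + s (.inr i) + 1) ∨
        Odd (k i : ℕ) ∧ Even (s (.inl i) + s (.inr i) + 1) := by
      grind
    · rwa [h₁.neg_one_pow, h₂.neg_one_pow, one_mul, neg_one_mul, self_eq_neg] at hj
    · rwa [h₁.neg_one_pow, h₂.neg_one_pow, one_mul, neg_one_mul, neg_eq_self] at hj
  rw [dunklMap_monomial, Pi.smul_apply, rowDet_apply, Matrix.det_eq_zero_of_row_eq_zero i,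
    smul_zero]
  exact fun j => congrFun hrow j

theorem surjective_dunklMap {K : Type*} [Field K] [CharZero K] :
    Function.Surjective (dunklMap K n) := by
  refine LinearMap.range_eq_top.1 (eq_top_of_coordAct_generators_mem
    (adjoin_raise_lower_eq_top K n) (fun h => ?_) ?_)
  · exact dunklMap_one_ne_zero (by simpa [h] using LinearMap.mem_range_self (dunklMap K n) 1)
  · rintro i A (rfl | rfl) u hu
    · exact intertwinesUpToLowerDegree_dunklMap.apply_mem_range (.inl i) hu
    · exact intertwinesUpToLowerDegree_dunklMap.apply_mem_range (.inr i) hu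

end DunklMap

section FiniteQuotient

open MulSemiringAction in
theorem finite_quotient_of_smul_eq_imp_sub_mem {K B G : Type*} [CommRing K] [CommRing B]
    [Algebra K B] [Algebra.FiniteType K B] [Group G] [Finite G] [MulSemiringAction G B]
    {I : Ideal B} (h : ∀ b, (∀ g : G, g • b = b) → ∃ c : K, b - algebraMap K B c ∈ I) :
    Module.Finite K (B ⧸ I) := by
  have hintegral : Algebra.IsIntegral K (B ⧸ I) := by
    refine ⟨fun x => ?_⟩
    obtain ⟨b, rfl⟩ := Ideal.Quotient.mk_surjective x
    have := Fintype.ofFinite G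
    have hlifts : (charpoly G b).map (Ideal.Quotient.mk I) ∈
        Polynomial.lifts (algebraMap K (B ⧸ I)) := by
      refine (Polynomial.lifts_iff_coeff_lifts _).2 fun m => ?_
      obtain ⟨c, hc⟩ := h _ (smul_coeff_charpoly b m)
      exact ⟨c, by simpa using ((Ideal.Quotient.mk_eq_mk_iff_sub_mem _ _).2 hc).symm⟩
    obtain ⟨q, hq, -, hmonic⟩ :=
      Polynomial.lifts_and_natDegree_eq_and_monic hlifts ((monic_charpoly G b).map _)
    refine ⟨q, hmonic, ?_⟩
    rw [← Polynomial.eval_map, hq, Polynomial.eval_map, Polynomial.eval₂_hom, eval_charpoly,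
      map_zero]
  exact Algebra.IsIntegral.finite

end FiniteQuotient

section SignedPermutations

variable {n : ℕ}

variable (n) in
/-- The group `W(Bₙ)`. The pair `(F, σ)` stands for the composition of `σ` with the sign change by
`F`, that is, for the signed permutation `(F ∘ σ, σ)` in the notation of `bAct`. -/
abbrev SignedPerm : Type := (Fin n → ℤˣ) ⋊[mulAutArrow] Equiv.Perm (Fin n)

noncomputable instance : Fintype (SignedPerm n) :=
  Fintype.ofEquiv _ SemidirectProduct.equivProd.symm

noncomputable instance : Invertible (Fintype.card (SignedPerm n) : ℂ) :=
  invertibleOfNonzero (Nat.cast_ne_zero.2 Fintype.card_ne_zero)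

theorem bAct_bAct (ε ε' : Fin n → ℤˣ) (σ σ' : Equiv.Perm (Fin n))
    (f : MvPolynomial (Fin n ⊕ Fin n) ℂ) :
    bAct n ε' σ' (bAct n ε σ f) = bAct n (ε * (ε' ∘ σ)) (σ' * σ) f := by
  have : (bAct n ε' σ').comp (bAct n ε σ) = bAct n (ε * (ε' ∘ σ)) (σ' * σ) := by
    apply algHom_ext
    rintro (i | i) <;> simp [bAct, smul_smul]
  exact congrArg (· f) this

variable (n) in
/-- The action `bAct`, as a homomorphism on the group `W(Bₙ)`. -/
noncomputable def bActHom :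
    SignedPerm n →* (MvPolynomial (Fin n ⊕ Fin n) ℂ →ₐ[ℂ] MvPolynomial (Fin n ⊕ Fin n) ℂ) where
  toFun g := bAct n (g.left ∘ g.right) g.right
  map_one' := by
    apply algHom_ext
    rintro (i | i) <;> simp [bAct]
  map_mul' g h := by
    ext f : 1
    rw [AlgHom.mul_apply, bAct_bAct]
    have hleft (i : Fin n) :
        mulAutArrow g.right h.left (g.right (h.right i)) = h.left (h.right i) :=
      congrArg h.left (g.right.symm_apply_apply _)
    congr 2
    ext i
    simp [hleft, mul_comm, -mulAutArrow_apply_apply]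

theorem bActHom_comp_symm (ε : Fin n → ℤˣ) (σ : Equiv.Perm (Fin n)) :
    bActHom n ⟨ε ∘ σ.symm, σ⟩ = bAct n ε σ :=
  congrArg (bAct n · σ) (by simp [Function.comp_assoc])

theorem finite_quotient_diagIdeal :
    Module.Finite ℂ (MvPolynomial (Fin n ⊕ Fin n) ℂ ⧸ diagIdeal n) := by
  let : MulSemiringAction (SignedPerm n) (MvPolynomial (Fin n ⊕ Fin n) ℂ) :=
    { smul g := bActHom n g
      one_smul f := congrArg (· f) (map_one (bActHom n))
      mul_smul g h f := congrArg (· f) (map_mul (bActHom n) g h)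
      smul_zero g := map_zero (bActHom n g)
      smul_add g := map_add (bActHom n g)
      smul_one g := map_one (bActHom n g)
      smul_mul g := map_mul (bActHom n g) }
  refine finite_quotient_of_smul_eq_imp_sub_mem (G := SignedPerm n) fun f hf => ?_
  refine ⟨constantCoeff f, Ideal.subset_span ⟨fun ε σ => ?_, by simp⟩⟩
  rw [map_sub, ← bActHom_comp_symm, AlgHom.commutes]
  exact congrArg (· - _) (hf _)

theorem bAct_monomial (ε : Fin n → ℤˣ) (σ : Equiv.Perm (Fin n)) (s : Fin n ⊕ Fin n →₀ ℕ) (c : ℂ) :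
    bAct n ε σ (monomial s c) = (∏ i, ε i ^ (s (.inl i) + s (.inr i))) •
      monomial (s.mapDomain (Sum.map σ σ)) c := by
  have hrename : monomial (s.mapDomain (Sum.map σ σ)) c = C c * ∏ v, X (Sum.map σ σ v) ^ s v := by
    rw [← rename_monomial, monomial_eq, map_mul, Finsupp.prod_fintype _ _ (by simp)]
    simp
  rw [hrename, bAct, aeval_monomial, Finsupp.prod_fintype _ _ (by simp), Fintype.prod_sum_type,
    Fintype.prod_sum_type, Units.smul_def, zsmul_eq_mul]
  simp only [Sum.elim_inl, Sum.elim_inr, Sum.map_inl, Sum.map_inr, smul_eq_C_mul, mul_pow,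
    Finset.prod_mul_distrib, pow_add, algebraMap_eq]
  push_cast
  simp only [map_intCast]
  ring

end SignedPermutations

section SemiInvariants

variable {n : ℕ}

theorem coeff_bAct (ε : Fin n → ℤˣ) (σ : Equiv.Perm (Fin n)) (s : Fin n ⊕ Fin n →₀ ℕ)
    (f : MvPolynomial (Fin n ⊕ Fin n) ℂ) :
    coeff (s.mapDomain (Sum.map σ σ)) (bAct n ε σ f) =
      (∏ i, ε i ^ (s (.inl i) + s (.inr i))) • coeff s f := by
  have hinj : Function.Injective (Finsupp.mapDomain (M := ℕ) (Sum.map σ σ)) :=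
    Finsupp.mapDomain_injective (σ.injective.sumMap σ.injective)
  induction f using MvPolynomial.induction_on' with
  | monomial t c =>
    rw [bAct_monomial, Units.smul_def, coeff_smul, coeff_monomial, coeff_monomial]
    obtain rfl | hts := eq_or_ne t s
    · rw [if_pos rfl, if_pos rfl, Units.smul_def]
    · rw [if_neg hts, if_neg (hinj.ne hts), smul_zero, smul_zero]
  | add p q hp hq => rw [map_add, coeff_add, coeff_add, hp, hq, smul_add]

theorem bAct_homogeneousComponent (ε : Fin n → ℤˣ) (σ : Equiv.Perm (Fin n)) (d : ℕ)
    (f : MvPolynomial (Fin n ⊕ Fin n) ℂ) :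
    bAct n ε σ (homogeneousComponent d f) = homogeneousComponent d (bAct n ε σ f) := by
  induction f using MvPolynomial.induction_on' with
  | monomial s c =>
    have hs : (monomial s c).IsHomogeneous s.degree := isHomogeneous_monomial c rfl
    have hs' : (monomial (s.mapDomain (Sum.map σ σ)) c).IsHomogeneous s.degree :=
      isHomogeneous_monomial c (Finsupp.degree_mapDomain _ _)
    rw [bAct_monomial, Units.smul_def, map_zsmul, homogeneousComponent_of_mem hs,
      homogeneousComponent_of_mem hs']
    split_ifs
    · rw [bAct_monomial, Units.smul_def]
    · rw [map_zero, smul_zero]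
  | add p q hp hq => simp only [map_add, hp, hq]

theorem bAct_mem_degreeLT (ε : Fin n → ℤˣ) (σ : Equiv.Perm (Fin n)) {d : ℕ}
    {f : MvPolynomial (Fin n ⊕ Fin n) ℂ} (hf : f ∈ degreeLT (Fin n ⊕ Fin n) ℂ d) :
    bAct n ε σ f ∈ degreeLT (Fin n ⊕ Fin n) ℂ d := by
  have hspan : degreeLT (Fin n ⊕ Fin n) ℂ d ≤
      (degreeLT (Fin n ⊕ Fin n) ℂ d).comap (bAct n ε σ).toLinearMap := by
    conv_lhs => rw [degreeLT, restrictSupport_eq_span]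
    refine Submodule.span_le.2 ?_
    rintro _ ⟨s, hs, rfl⟩
    rw [SetLike.mem_coe, Submodule.mem_comap, AlgHom.toLinearMap_apply, bAct_monomial,
      Units.smul_def]
    exact zsmul_mem (monomial_mem_degreeLT (by rwa [Finsupp.degree_mapDomain]) 1) _
  exact hspan hf

/-- The polynomials on which `W(Bₙ)` acts through the `c`-th power of its linear character
`(ε, σ) ↦ ∏ i, ε i`. -/
def IsSemiInvariant (c : ℕ) (f : MvPolynomial (Fin n ⊕ Fin n) ℂ) : Prop :=
  ∀ ε σ, bAct n ε σ f = (∏ i, ε i) ^ c • f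

theorem isSemiInvariant_zero_iff {f : MvPolynomial (Fin n ⊕ Fin n) ℂ} :
    IsSemiInvariant 0 f ↔ ∀ ε σ, bAct n ε σ f = f := by
  simp only [IsSemiInvariant, pow_zero, one_smul]

namespace IsSemiInvariant

variable {c : ℕ} {f : MvPolynomial (Fin n ⊕ Fin n) ℂ}

theorem homogeneousComponent (hf : IsSemiInvariant c f) (d : ℕ) :
    IsSemiInvariant c (homogeneousComponent d f) := fun ε σ => by
  rw [bAct_homogeneousComponent, hf, Units.smul_def, map_zsmul, Units.smul_def]

theorem coeff_mapDomain (hf : IsSemiInvariant c f) (σ : Equiv.Perm (Fin n))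
    (s : Fin n ⊕ Fin n →₀ ℕ) : coeff (s.mapDomain (Sum.map σ σ)) f = coeff s f := by
  simpa [hf 1 σ] using coeff_bAct 1 σ s f

theorem even_of_coeff_ne_zero (hf : IsSemiInvariant c f) {s : Fin n ⊕ Fin n →₀ ℕ}
    (hs : coeff s f ≠ 0) (i : Fin n) : Even (s (.inl i) + s (.inr i) + c) := by
  have h := coeff_bAct (Function.update 1 i (-1)) 1 s f
  have hprod (e : Fin n → ℕ) :
      ∏ j, (Function.update 1 i (-1) : Fin n → ℤˣ) j ^ e j = (-1) ^ e i := by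
    rw [Finset.prod_eq_single i (fun j _ hj => by simp [hj]) (by simp), Function.update_self]
  have hprod_one : ∏ j, (Function.update 1 i (-1) : Fin n → ℤˣ) j = -1 := by simpa using hprod 1
  rw [hf, hprod, hprod_one, Equiv.Perm.coe_one, Sum.map_id_id, Finsupp.mapDomain_id,
    coeff_smul, Units.smul_def, Units.smul_def] at h
  have hpow : (-1 : ℤˣ) ^ c = (-1) ^ (s (.inl i) + s (.inr i)) :=
    Units.ext (smul_left_injective ℤ hs h)
  rw [← neg_one_pow_eq_one_iff_even (R := ℤˣ) (by decide), pow_add, hpow, Int.units_mul_self]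

end IsSemiInvariant

variable (n) in
/-- The action of `W(Bₙ)` on polynomials, twisted by the character `(ε, σ) ↦ ∏ i, ε i`. -/
noncomputable def twistedRep :
    Representation ℂ (SignedPerm n) (MvPolynomial (Fin n ⊕ Fin n) ℂ) where
  toFun g := (∏ i, g.left i) • (bActHom n g).toLinearMap
  map_one' := by simp; rfl
  map_mul' g h := by
    have hprod : ∏ i, mulAutArrow g.right h.left i = ∏ i, h.left i :=
      Equiv.prod_comp g.right.symm h.left
    refine LinearMap.ext fun f => ?_
    simp only [SemidirectProduct.mul_left, Pi.mul_apply, Finset.prod_mul_distrib, hprod, map_mul,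
      mul_smul, Units.smul_def, LinearMap.smul_apply, AlgHom.toLinearMap_apply, AlgHom.mul_apply,
      Module.End.mul_apply, map_zsmul]
    exact smul_comm _ _ _

theorem twistedRep_apply (g : SignedPerm n) (f : MvPolynomial (Fin n ⊕ Fin n) ℂ) :
    twistedRep n g f = (∏ i, g.left i) • bActHom n g f := rfl

theorem mem_invariants_twistedRep {f : MvPolynomial (Fin n ⊕ Fin n) ℂ} :
    f ∈ (twistedRep n).invariants ↔ IsSemiInvariant 1 f := by
  have hiff (g : SignedPerm n) :
      twistedRep n g f = f ↔ bActHom n g f = (∏ i, g.left i) • f := by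
    rw [twistedRep_apply, ← eq_inv_smul_iff, Int.units_inv_eq_self]
  simp only [Representation.mem_invariants, hiff, IsSemiInvariant, pow_one]
  refine ⟨fun h ε σ => ?_, fun h g => ?_⟩
  · rw [← bActHom_comp_symm, h]
    exact congrArg (· • f) (Equiv.prod_comp σ.symm ε)
  · exact (h _ _).trans (congrArg (· • f) (Equiv.prod_comp g.right g.left))

theorem averageMap_apply {k G V : Type*} [CommRing k] [Group G] [Fintype G]
    [Invertible (Fintype.card G : k)] [AddCommGroup V] [Module k V] (ρ : Representation k G V)
    (u : V) : ρ.averageMap u = ⅟(Fintype.card G : k) • ∑ g, ρ g u := by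
  simp [GroupAlgebra.average, map_sum]

variable (n) in
/-- The projection of the polynomials onto those transforming under `W(Bₙ)` by the character
`(ε, σ) ↦ ∏ i, ε i`. -/
noncomputable def semiInvariantProj :
    MvPolynomial (Fin n ⊕ Fin n) ℂ →ₗ[ℂ] MvPolynomial (Fin n ⊕ Fin n) ℂ :=
  (twistedRep n).averageMap

theorem isSemiInvariant_semiInvariantProj (f : MvPolynomial (Fin n ⊕ Fin n) ℂ) :
    IsSemiInvariant 1 (semiInvariantProj n f) :=
  mem_invariants_twistedRep.1 (Representation.averageMap_invariant _ f)

theorem semiInvariantProj_eq_self {f : MvPolynomial (Fin n ⊕ Fin n) ℂ} (hf : IsSemiInvariant 1 f) :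
    semiInvariantProj n f = f :=
  Representation.averageMap_id _ f (mem_invariants_twistedRep.2 hf)

theorem semiInvariantProj_mul {h : MvPolynomial (Fin n ⊕ Fin n) ℂ} (hh : IsSemiInvariant 0 h)
    (f : MvPolynomial (Fin n ⊕ Fin n) ℂ) :
    semiInvariantProj n (f * h) = semiInvariantProj n f * h := by
  have hg (g : SignedPerm n) : twistedRep n g (f * h) = twistedRep n g f * h := by
    rw [twistedRep_apply, map_mul, twistedRep_apply, smul_mul_assoc]
    exact congrArg _ (congrArg _ (isSemiInvariant_zero_iff.1 hh _ _))
  simp only [semiInvariantProj, averageMap_apply, hg, Finset.sum_mul, smul_mul_assoc]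

theorem semiInvariantProj_mem_degreeLT {d : ℕ} {f : MvPolynomial (Fin n ⊕ Fin n) ℂ}
    (hf : f ∈ degreeLT (Fin n ⊕ Fin n) ℂ d) :
    semiInvariantProj n f ∈ degreeLT (Fin n ⊕ Fin n) ℂ d := by
  rw [semiInvariantProj, averageMap_apply]
  refine Submodule.smul_mem _ _ (sum_mem fun g _ => ?_)
  rw [twistedRep_apply, Units.smul_def]
  exact zsmul_mem (bAct_mem_degreeLT _ _ hf) _

end SemiInvariants

section DiagonalIdeal

variable {n : ℕ}

theorem dunklMap_apply_comp_perm (σ : Equiv.Perm (Fin n)) (f : MvPolynomial (Fin n ⊕ Fin n) ℂ)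
    (k : Fin n → Fin (2 * n + 1)) :
    dunklMap ℂ n f (k ∘ σ) = Equiv.Perm.sign σ • dunklMap ℂ n (bAct n 1 σ f) k := by
  induction f using MvPolynomial.induction_on' with
  | monomial s c =>
    have hinj : Function.Injective (Sum.map σ σ) := σ.injective.sumMap σ.injective
    have hcomp : (fun i => letterColumns ℂ n (s (.inl i)) (s (.inr i))) =
        (fun i => letterColumns ℂ n (s.mapDomain (Sum.map σ σ) (.inl i))
          (s.mapDomain (Sum.map σ σ) (.inr i))) ∘ σ := by
      ext i : 1
      rw [Function.comp_apply, ← Sum.map_inl (f := σ) (g := σ), Finsupp.mapDomain_apply hinj,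
        ← Sum.map_inr (f := σ) (g := σ), Finsupp.mapDomain_apply hinj]
    rw [bAct_monomial, dunklMap_monomial, hcomp, Pi.smul_apply, rowDet_comp_perm]
    simp [dunklMap_monomial, mul_smul_comm]
  | add p q hp hq => rw [map_add, map_add, map_add, Pi.add_apply, Pi.add_apply, hp, hq, smul_add]

theorem IsSemiInvariant.dunklMap_mem_altSupported {c : ℕ} {f : MvPolynomial (Fin n ⊕ Fin n) ℂ}
    (hf : IsSemiInvariant c f) :
    dunklMap ℂ n f ∈ altSupported ℂ n {l : Fin (2 * n + 1) | Odd (l + c : ℕ)} := by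
  refine ⟨fun σ k => by simpa [hf 1 σ] using dunklMap_apply_comp_perm σ f k, fun k hk i => ?_⟩
  rw [f.as_sum, map_sum, Finset.sum_apply] at hk
  obtain ⟨s, hs, hsk⟩ := Finset.exists_ne_zero_of_sum_ne_zero hk
  have hodd := odd_of_dunklMap_monomial_apply_ne_zero hsk i
  have heven := hf.even_of_coeff_ne_zero (mem_support_iff.1 hs) i
  rw [Finset.mem_filter_univ]
  grind

theorem finrank_altSupported_odd_add_le {K : Type*} [CommRing K] [Nontrivial K]
    [IsAddTorsionFree K] (c : ℕ) :
    Module.finrank K (altSupported K n {l : Fin (2 * n + 1) | Odd (l + c : ℕ)}) ≤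
      (n + c).choose n := by
  refine (finrank_altSupported_le _).trans (Nat.choose_le_choose n ?_)
  rw [← Finset.card_range (n + c)]
  refine Finset.card_le_card_of_injOn (fun l => (l : ℕ) / 2) (fun l hl => ?_) fun l hl m hm h => ?_
  · simp only [Finset.coe_filter_univ, Set.mem_ofPred_eq] at hl
    simp
    grind
  · simp only [Finset.coe_filter_univ, Set.mem_ofPred_eq] at hl hm
    ext
    grind

theorem IsSemiInvariant.exists_dunklMap_eq_smul {f : MvPolynomial (Fin n ⊕ Fin n) ℂ}
    (hf : IsSemiInvariant 0 f) : ∃ c : ℂ, dunklMap ℂ n f = c • dunklMap ℂ n 1 := by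
  have hmem {g : MvPolynomial (Fin n ⊕ Fin n) ℂ} (hg : IsSemiInvariant 0 g) :
      dunklMap ℂ n g ∈ altSupported ℂ n {l : Fin (2 * n + 1) | Odd (l + 0 : ℕ)} :=
    hg.dunklMap_mem_altSupported
  have hone : IsSemiInvariant 0 (1 : MvPolynomial (Fin n ⊕ Fin n) ℂ) :=
    isSemiInvariant_zero_iff.2 fun _ _ => map_one _
  have hne : (⟨_, hmem hone⟩ : altSupported ℂ n {l : Fin (2 * n + 1) | Odd (l + 0 : ℕ)}) ≠ 0 :=
    Subtype.coe_ne_coe.1 dunklMap_one_ne_zero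
  have hle := (finrank_altSupported_odd_add_le (K := ℂ) (n := n) 0).trans_eq (Nat.choose_self n)
  have hdim := le_antisymm hle (Module.finrank_pos_iff_exists_ne_zero.2 ⟨_, hne⟩)
  obtain ⟨c, hc⟩ := exists_smul_eq_of_finrank_eq_one hdim hne ⟨_, hmem hf⟩
  exact ⟨c, (congrArg Subtype.val hc).symm⟩

theorem diagIdeal_le_leadingForms :
    (diagIdeal n).restrictScalars ℂ ≤ leadingForms (dunklMap ℂ n) := by
  refine intertwinesUpToLowerDegree_dunklMap.span_le_leadingForms fun h ⟨hinv, hconst⟩ => ?_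
  refine mem_leadingForms.2 fun d => ?_
  cases d with
  | zero => simp [homogeneousComponent_zero, ← constantCoeff_eq, hconst, zero_mem]
  | succ d =>
    have hcomp := (isSemiInvariant_zero_iff.2 hinv).homogeneousComponent (d + 1)
    obtain ⟨c, hc⟩ := hcomp.exists_dunklMap_eq_smul
    have hone : (1 : MvPolynomial (Fin n ⊕ Fin n) ℂ) ∈ degreeLT (Fin n ⊕ Fin n) ℂ (d + 1) :=
      monomial_mem_degreeLT (by simp) 1
    exact ⟨c • 1, Submodule.smul_mem _ c hone, by rw [map_smul, hc]⟩

theorem homogeneousComponent_mem_diagIdeal {f : MvPolynomial (Fin n ⊕ Fin n) ℂ}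
    (hf : f ∈ diagIdeal n) (d : ℕ) : homogeneousComponent d f ∈ diagIdeal n := by
  have hspan : diagIdeal n = Ideal.span {f | ((∀ ε σ, bAct n ε σ f = f) ∧ constantCoeff f = 0) ∧
      SetLike.IsHomogeneousElem (homogeneousSubmodule (Fin n ⊕ Fin n) ℂ) f} := by
    refine le_antisymm (Ideal.span_le.2 fun h ⟨hinv, hconst⟩ => ?_)
      (Ideal.span_mono fun _ => And.left)
    rw [← sum_homogeneousComponent h]
    refine sum_mem fun e _ => Ideal.subset_span
      ⟨⟨fun ε σ => by rw [bAct_homogeneousComponent, hinv], ?_⟩,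
        e, homogeneousComponent_isHomogeneous e h⟩
    rw [constantCoeff_eq] at hconst ⊢
    rw [coeff_homogeneousComponent, hconst, ite_self]
  let := gradedAlgebra (σ := Fin n ⊕ Fin n) (R := ℂ)
  rw [hspan] at hf ⊢
  exact homogeneousComponent_mem_of_mem (Ideal.homogeneous_span _ _ fun _ => And.right) hf d

end DiagonalIdeal

section Functionals

variable {n : ℕ}

/-- Exponent vectors of monomials in `x, y` as words, the `i`-th letter being the pair of exponents
of `x i` and `y i`. -/
noncomputable def wordEquiv : (Fin n → ℕ × ℕ) ≃ (Fin n ⊕ Fin n →₀ ℕ) :=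
  (Equiv.arrowProdEquivProdArrow (Fin n) (fun _ => ℕ) (fun _ => ℕ)).trans <|
    (Equiv.sumArrowEquivProdArrow (Fin n) (Fin n) ℕ).symm.trans Finsupp.equivFunOnFinite.symm

theorem wordEquiv_inl (e : Fin n → ℕ × ℕ) (i : Fin n) : wordEquiv e (.inl i) = (e i).1 := rfl

theorem wordEquiv_inr (e : Fin n → ℕ × ℕ) (i : Fin n) : wordEquiv e (.inr i) = (e i).2 := rfl

theorem wordEquiv_zero : wordEquiv (0 : Fin n → ℕ × ℕ) = 0 := by
  ext (i | i) <;> rfl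

theorem wordEquiv_sub (e q : Fin n → ℕ × ℕ) : wordEquiv (e - q) = wordEquiv e - wordEquiv q := by
  ext (i | i) <;> rfl

theorem wordEquiv_le_wordEquiv {e q : Fin n → ℕ × ℕ} : wordEquiv q ≤ wordEquiv e ↔ q ≤ e := by
  simp only [Finsupp.le_def, Pi.le_def, Prod.le_def, Sum.forall, wordEquiv_inl, wordEquiv_inr,
    forall_and]

theorem mapDomain_wordEquiv (e : Fin n → ℕ × ℕ) (σ : Equiv.Perm (Fin n)) :
    (wordEquiv e).mapDomain (Sum.map σ σ) = wordEquiv (e ∘ σ.symm) := by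
  ext (i | i)
  · exact Finsupp.mapDomain_equiv_apply (f := Equiv.sumCongr σ σ) _ _
  · exact Finsupp.mapDomain_equiv_apply (f := Equiv.sumCongr σ σ) _ _

theorem coeff_mul_monomial_wordEquiv {e q : Fin n → ℕ × ℕ} (hqe : q ≤ e)
    (g : MvPolynomial (Fin n ⊕ Fin n) ℂ) (c : ℂ) :
    coeff (wordEquiv e) (g * monomial (wordEquiv q) c) = coeff (wordEquiv (e - q)) g * c := by
  rw [coeff_mul_monomial', if_pos (wordEquiv_le_wordEquiv.2 hqe), wordEquiv_sub]

theorem le_and_coeff_sub_ne_zero_of_coeff_mul_monomial_ne_zero {e q : Fin n → ℕ × ℕ}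
    {g : MvPolynomial (Fin n ⊕ Fin n) ℂ} {c : ℂ}
    (h : coeff (wordEquiv e) (g * monomial (wordEquiv q) c) ≠ 0) :
    q ≤ e ∧ coeff (wordEquiv (e - q)) g ≠ 0 := by
  rw [coeff_mul_monomial', ite_ne_right_iff] at h
  rw [wordEquiv_sub]
  exact ⟨wordEquiv_le_wordEquiv.1 h.1, left_ne_zero_of_mul h.2⟩

namespace IsSemiInvariant

theorem coeff_wordEquiv_comp {c : ℕ} {g : MvPolynomial (Fin n ⊕ Fin n) ℂ}
    (hg : IsSemiInvariant c g) (e : Fin n → ℕ × ℕ) (σ : Equiv.Perm (Fin n)) :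
    coeff (wordEquiv (e ∘ σ)) g = coeff (wordEquiv e) g := by
  simpa [mapDomain_wordEquiv] using hg.coeff_mapDomain σ.symm (wordEquiv e)

variable {g : MvPolynomial (Fin n ⊕ Fin n) ℂ}

theorem odd_of_coeff_wordEquiv_ne_zero (hg : IsSemiInvariant 1 g) {e : Fin n → ℕ × ℕ}
    (he : coeff (wordEquiv e) g ≠ 0) (i : Fin n) : Odd ((e i).1 + (e i).2) := by
  simpa [Nat.even_add_one, wordEquiv_inl, wordEquiv_inr] using hg.even_of_coeff_ne_zero he i

theorem eq_zero_of_coeff_sub_ne_zero (hg : IsSemiInvariant 1 g) {e q : Fin n → ℕ × ℕ}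
    (hq : coeff (wordEquiv (e - q)) g ≠ 0) (hqe : q ≤ e) {i : Fin n}
    (hi : (e i).1 + (e i).2 = 1) : q i = 0 := by
  have hodd := hg.odd_of_coeff_wordEquiv_ne_zero hq i
  have hle := hqe i
  rw [Prod.le_def] at hle
  simp only [Pi.sub_apply, Prod.fst_sub, Prod.snd_sub] at hodd
  ext <;> simp only [Prod.fst_zero, Prod.snd_zero] <;> grind

end IsSemiInvariant

variable (n) in
/-- The exponents of the squarefree monomial in which the first `j` letters are `x` and the others
are `y`. -/
def linearWord (j : ℕ) (i : Fin n) : ℕ × ℕ := if i < j then (1, 0) else (0, 1)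

variable (n) in
/-- The exponents of `(x₀ ^ r * y₀ ^ (3 - r)) * x₁ * ⋯ * xₘ * yₘ₊₁ * ⋯`, where `m = D - r` makes the
degree in `x` equal to `D`. -/
def cubicWord (D r : ℕ) (i : Fin n) : ℕ × ℕ :=
  if (i : ℕ) = 0 then (r, 3 - r) else if i + r ≤ D then (1, 0) else (0, 1)

variable (n) in
/-- The exponents of the quadratic monomial `x₀ ^ ρ * y₀ ^ (2 - ρ)`. -/
def quadraticWord (ρ : ℕ) (i : Fin n) : ℕ × ℕ := if (i : ℕ) = 0 then (ρ, 2 - ρ) else 0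

theorem IsSemiInvariant.coeff_linearWord_mul_monomial {g : MvPolynomial (Fin n ⊕ Fin n) ℂ}
    (hg : IsSemiInvariant 1 g) {q : Fin n → ℕ × ℕ} (hq : q ≠ 0) (c : ℂ) (j : ℕ) :
    coeff (wordEquiv (linearWord n j)) (g * monomial (wordEquiv q) c) = 0 := by
  by_contra h
  obtain ⟨hle, hne⟩ := le_and_coeff_sub_ne_zero_of_coeff_mul_monomial_ne_zero h
  refine hq (funext fun i => hg.eq_zero_of_coeff_sub_ne_zero hne hle ?_)
  rw [linearWord]
  split_ifs <;> rfl

theorem quadraticWord_le_cubicWord_iff [NeZero n] {D ρ r : ℕ} (hρ : ρ ≤ 2) (hr : r ≤ 3) :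
    quadraticWord n ρ ≤ cubicWord n D r ↔ r = ρ ∨ r = ρ + 1 := by
  rw [Pi.le_def]
  refine ⟨fun h => ?_, fun h i => ?_⟩
  · have hzero := h 0
    simp only [quadraticWord, cubicWord, Fin.val_zero, if_true, Prod.mk_le_mk] at hzero
    omega
  · rw [quadraticWord, cubicWord]
    split_ifs
    exacts [Prod.mk_le_mk.2 (by omega), zero_le, zero_le]

theorem cubicWord_succ_sub_quadraticWord {D ρ : ℕ} (hρ : ρ < D) :
    cubicWord n D (ρ + 1) - quadraticWord n ρ = linearWord n (D - ρ) := by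
  ext i <;> simp only [cubicWord, quadraticWord, linearWord, Pi.sub_apply] <;> split_ifs <;>
    grind [Prod.fst_sub, Prod.snd_sub, Prod.fst_zero, Prod.snd_zero]

theorem cubicWord_sub_quadraticWord [NeZero n] {D ρ : ℕ} (hρ : ρ < D) (hρ2 : ρ ≤ 2) (hD : D < n) :
    cubicWord n D ρ - quadraticWord n ρ =
      linearWord n (D - ρ) ∘ Equiv.swap 0 ⟨D - ρ, by omega⟩ := by
  have hzero (i : Fin n) : i = 0 ↔ (i : ℕ) = 0 := Fin.ext_iff
  ext i <;> simp only [cubicWord, quadraticWord, linearWord, Pi.sub_apply, Function.comp_apply,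
    Equiv.swap_apply_def, hzero, Fin.ext_iff] <;> split_ifs <;>
    grind [Prod.fst_sub, Prod.snd_sub, Prod.fst_zero, Prod.snd_zero]

theorem IsSemiInvariant.coeff_cubicWord_mul_monomial_quadraticWord [NeZero n]
    {g : MvPolynomial (Fin n ⊕ Fin n) ℂ} (hg : IsSemiInvariant 1 g) {D ρ r : ℕ} (hD : 3 ≤ D)
    (hDn : D < n) (hρ : ρ ≤ 2) (hr : r ≤ 3) (c : ℂ) :
    coeff (wordEquiv (cubicWord n D r)) (g * monomial (wordEquiv (quadraticWord n ρ)) c) =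
      if r = ρ ∨ r = ρ + 1 then coeff (wordEquiv (linearWord n (D - ρ))) g * c else 0 := by
  have hle := quadraticWord_le_cubicWord_iff (n := n) (D := D) hρ hr
  split_ifs with h
  · rw [coeff_mul_monomial_wordEquiv (hle.2 h)]
    obtain rfl | rfl := h
    · rw [cubicWord_sub_quadraticWord (by omega) hρ hDn, hg.coeff_wordEquiv_comp]
    · rw [cubicWord_succ_sub_quadraticWord (by omega)]
  · by_contra hne
    exact h (hle.1 (le_and_coeff_sub_ne_zero_of_coeff_mul_monomial_ne_zero hne).1)

theorem IsSemiInvariant.exists_eq_quadraticWord {g : MvPolynomial (Fin n ⊕ Fin n) ℂ}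
    (hg : IsSemiInvariant 1 g) {D r : ℕ} (hr : r ≤ 3) {q : Fin n → ℕ × ℕ} (hq : q ≠ 0) {c : ℂ}
    (hne : coeff (wordEquiv (cubicWord n D r)) (g * monomial (wordEquiv q) c) ≠ 0) :
    ∃ ρ ≤ 2, q = quadraticWord n ρ := by
  obtain ⟨hle, hne⟩ := le_and_coeff_sub_ne_zero_of_coeff_mul_monomial_ne_zero hne
  have hzero (i : Fin n) (hi : (i : ℕ) ≠ 0) : q i = 0 := by
    refine hg.eq_zero_of_coeff_sub_ne_zero hne hle ?_
    rw [cubicWord, if_neg hi]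
    split_ifs <;> rfl
  obtain ⟨i, hi⟩ := Function.ne_iff.1 hq
  have hi0 : (i : ℕ) = 0 := by_contra fun h => hi (hzero i h)
  have hodd := hg.odd_of_coeff_wordEquiv_ne_zero hne i
  have hlei := hle i
  simp only [Prod.le_def, cubicWord, hi0, if_true, Pi.sub_apply, Prod.fst_sub, Prod.snd_sub]
    at hodd hlei
  have hdeg : (q i).1 + (q i).2 = 2 := by
    have : (q i).1 + (q i).2 ≠ 0 := by simpa [Prod.ext_iff] using hi
    grind
  refine ⟨(q i).1, by omega, funext fun k => ?_⟩
  by_cases hk : (k : ℕ) = 0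
  · obtain rfl : k = i := Fin.ext (hk.trans hi0.symm)
    rw [quadraticWord, if_pos hk, ← hdeg, Nat.add_sub_cancel_left]
  · rw [hzero k hk, quadraticWord, if_neg hk]

variable (n) in
/-- Functionals on polynomials: coefficients in degree `n`, and alternating sums of coefficients in
degree `n + 2`, whose terms cancel in pairs on the product of a quadratic monomial and a polynomial
that is semi-invariant for `(ε, σ) ↦ ∏ i, ε i`. -/
noncomputable def wordFunctional :
    MvPolynomial (Fin n ⊕ Fin n) ℂ →ₗ[ℂ] (Fin (n + 1) ⊕ Fin (n - 3) → ℂ) :=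
  LinearMap.pi <| Sum.elim
    (fun j => lcoeff ℂ (wordEquiv (linearWord n j)))
    (fun w => ∑ r ∈ Finset.range 4, (-1) ^ r • lcoeff ℂ (wordEquiv (cubicWord n (w + 3) r)))

theorem wordFunctional_inr (f : MvPolynomial (Fin n ⊕ Fin n) ℂ) (w : Fin (n - 3)) :
    wordFunctional n f (.inr w) =
      ∑ r ∈ Finset.range 4, (-1) ^ r • coeff (wordEquiv (cubicWord n (w + 3) r)) f := by
  simp [wordFunctional]

theorem IsSemiInvariant.wordFunctional_mul_monomial {g : MvPolynomial (Fin n ⊕ Fin n) ℂ}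
    (hg : IsSemiInvariant 1 g) {q : Fin n → ℕ × ℕ} (hq : q ≠ 0) (c : ℂ) :
    wordFunctional n (g * monomial (wordEquiv q) c) = 0 := by
  ext (j | w)
  · exact hg.coeff_linearWord_mul_monomial hq c j
  · have hn : (w : ℕ) + 3 < n := Nat.add_lt_of_lt_sub w.isLt
    have := NeZero.of_pos (Nat.zero_lt_of_lt hn)
    rw [wordFunctional_inr, Pi.zero_apply]
    by_cases hquad : ∃ ρ ≤ 2, q = quadraticWord n ρ
    · obtain ⟨ρ, hρ, rfl⟩ := hquad
      rw [Finset.sum_congr rfl fun r hr => by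
        rw [hg.coeff_cubicWord_mul_monomial_quadraticWord (Nat.le_add_left 3 w) hn hρ
          (Nat.le_of_lt_succ (Finset.mem_range.1 hr))]]
      interval_cases ρ <;> simp [Finset.sum_range_succ, pow_succ]
    · refine Finset.sum_eq_zero fun r hr => ?_
      by_contra hne
      exact hquad (hg.exists_eq_quadraticWord (Nat.le_of_lt_succ (Finset.mem_range.1 hr)) hq
        (right_ne_zero_of_smul hne))

theorem IsSemiInvariant.wordFunctional_mul {g h : MvPolynomial (Fin n ⊕ Fin n) ℂ}
    (hg : IsSemiInvariant 1 g) (hh : constantCoeff h = 0) : wordFunctional n (g * h) = 0 := by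
  rw [h.as_sum, Finset.mul_sum, map_sum]
  refine Finset.sum_eq_zero fun s hs => ?_
  obtain ⟨q, rfl⟩ := wordEquiv.surjective s
  refine hg.wordFunctional_mul_monomial ?_ _
  rintro rfl
  exact mem_support_iff.1 hs (wordEquiv_zero ▸ hh)

theorem wordFunctional_semiInvariantProj_of_mem_diagIdeal {f : MvPolynomial (Fin n ⊕ Fin n) ℂ}
    (hf : f ∈ diagIdeal n) : wordFunctional n (semiInvariantProj n f) = 0 := by
  suffices ∀ a, wordFunctional n (semiInvariantProj n (a * f)) = 0 by simpa using this 1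
  induction hf using Submodule.span_induction with
  | mem h hh =>
    intro a
    rw [semiInvariantProj_mul (isSemiInvariant_zero_iff.2 hh.1)]
    exact (isSemiInvariant_semiInvariantProj a).wordFunctional_mul hh.2
  | zero => simp
  | add f g _ _ hf hg => simp [mul_add, hf, hg]
  | smul b f _ hf => exact fun a => by rw [smul_eq_mul, ← mul_assoc, hf]

end Functionals

section OrbitSums

variable {n : ℕ}

/-- The sum of the monomials obtained from the word `e` by permuting the letters, each with
multiplicity the order of the stabiliser of `e`. -/
noncomputable def orbitSum (e : Fin n → ℕ × ℕ) : MvPolynomial (Fin n ⊕ Fin n) ℂ :=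
  ∑ σ : Equiv.Perm (Fin n), monomial (wordEquiv (e ∘ σ)) 1

theorem coeff_wordEquiv_orbitSum (e e' : Fin n → ℕ × ℕ) :
    coeff (wordEquiv e') (orbitSum e) =
      (Finset.univ.filter fun σ : Equiv.Perm (Fin n) => e ∘ σ = e').card := by
  simp [orbitSum, coeff_sum, coeff_monomial]

theorem bAct_monomial_wordEquiv {e : Fin n → ℕ × ℕ} (he : ∀ i, Odd ((e i).1 + (e i).2))
    (ε : Fin n → ℤˣ) (τ : Equiv.Perm (Fin n)) (c : ℂ) :
    bAct n ε τ (monomial (wordEquiv e) c) =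
      (∏ i, ε i) • monomial (wordEquiv (e ∘ τ.symm)) c := by
  have hpow (i : Fin n) : ε i ^ (wordEquiv e (.inl i) + wordEquiv e (.inr i)) = ε i := by
    rw [wordEquiv_inl, wordEquiv_inr, Int.units_pow_eq_pow_mod_two, Nat.odd_iff.1 (he i), pow_one]
  simp only [bAct_monomial, hpow, mapDomain_wordEquiv]

theorem isSemiInvariant_orbitSum {e : Fin n → ℕ × ℕ} (he : ∀ i, Odd ((e i).1 + (e i).2)) :
    IsSemiInvariant 1 (orbitSum e) := by
  intro ε τ
  have hterm (σ : Equiv.Perm (Fin n)) : bAct n ε τ (monomial (wordEquiv (e ∘ σ)) 1) =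
      (∏ i, ε i) • monomial (wordEquiv (e ∘ (σ * τ⁻¹))) 1 :=
    bAct_monomial_wordEquiv (fun i => he (σ i)) ε τ 1
  simp only [orbitSum, map_sum, hterm, ← Finset.smul_sum, pow_one]
  congr 1
  exact Equiv.sum_comp (Equiv.mulRight τ⁻¹) fun σ => monomial (wordEquiv (e ∘ σ)) (1 : ℂ)

theorem sum_linearWord {j : ℕ} (hj : j ≤ n) : ∑ i, linearWord n j i = (j, n - j) := by
  simp only [linearWord, Finset.sum_ite, Finset.sum_const, Finset.filter_not,
    Finset.card_sdiff_of_subset (Finset.filter_subset _ _), Fin.card_filter_val_lt, min_eq_right hj]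
  simp

theorem sum_cubicWord_zero {D : ℕ} (hD : D < n) :
    ∑ i, cubicWord n D 0 i = (D, n + 2 - D) := by
  obtain ⟨n, rfl⟩ := Nat.exists_eq_add_one.2 (Nat.zero_lt_of_lt hD)
  have hsucc (i : Fin n) : cubicWord (n + 1) D 0 i.succ = linearWord n D i := by
    simp only [cubicWord, linearWord, Fin.val_succ, Nat.succ_ne_zero, if_false]
    rfl
  rw [Fin.sum_univ_succ, Finset.sum_congr rfl fun i _ => hsucc i,
    sum_linearWord (Nat.le_of_lt_succ hD)]
  exact Prod.ext (Nat.zero_add D) (by change 3 + (n - D) = n + 1 + 2 - D; omega)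

variable (n) in
/-- The words whose orbit sums are dual to `wordFunctional n`, up to scaling. -/
def baseWord : Fin (n + 1) ⊕ Fin (n - 3) → Fin n → ℕ × ℕ :=
  Sum.elim (fun j => linearWord n j) fun w => cubicWord n (w + 3) 0

theorem odd_baseWord (t : Fin (n + 1) ⊕ Fin (n - 3)) (i : Fin n) :
    Odd ((baseWord n t i).1 + (baseWord n t i).2) := by
  cases t <;> simp only [baseWord, Sum.elim_inl, Sum.elim_inr, linearWord, cubicWord] <;>
    split_ifs <;> decide

theorem sum_baseWord_injective : Function.Injective fun t => ∑ i, baseWord n t i := by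
  have hl (j : Fin (n + 1)) : ∑ i, baseWord n (.inl j) i = ((j : ℕ), n - j) :=
    sum_linearWord (Nat.le_of_lt_succ j.isLt)
  have hr (w : Fin (n - 3)) : ∑ i, baseWord n (.inr w) i = ((w : ℕ) + 3, n + 2 - (w + 3)) :=
    sum_cubicWord_zero (Nat.add_lt_of_lt_sub w.isLt)
  rintro (j | w) (j' | w') h <;> simp only [hl, hr, Prod.mk.injEq] at h <;> grind

theorem baseWord_ne_of_ne_zero (t : Fin (n + 1) ⊕ Fin (n - 3)) (i : Fin n) {r : ℕ} (hr : r ≠ 0) :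
    baseWord n t i ≠ (r, 3 - r) := by
  cases t <;> simp only [baseWord, Sum.elim_inl, Sum.elim_inr, linearWord, cubicWord] <;>
    split_ifs <;> grind

theorem coeff_baseWord_orbitSum_baseWord {t t' : Fin (n + 1) ⊕ Fin (n - 3)} (h : t' ≠ t) :
    coeff (wordEquiv (baseWord n t')) (orbitSum (baseWord n t)) = 0 := by
  have hσ (σ : Equiv.Perm (Fin n)) : baseWord n t ∘ σ ≠ baseWord n t' := fun hσ =>
    h.symm <| sum_baseWord_injective <| (Equiv.sum_comp σ (baseWord n t)).symm.trans <|
      Finset.sum_congr rfl fun i _ => congrFun hσ i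
  simp [coeff_wordEquiv_orbitSum, hσ]

theorem coeff_cubicWord_orbitSum_baseWord [NeZero n] (t : Fin (n + 1) ⊕ Fin (n - 3)) (D : ℕ) {r : ℕ}
    (hr : r ≠ 0) : coeff (wordEquiv (cubicWord n D r)) (orbitSum (baseWord n t)) = 0 := by
  have hσ (σ : Equiv.Perm (Fin n)) : baseWord n t ∘ σ ≠ cubicWord n D r := fun hσ =>
    baseWord_ne_of_ne_zero t (σ 0) hr (by simpa [cubicWord] using congrFun hσ 0)
  simp [coeff_wordEquiv_orbitSum, hσ]

theorem wordFunctional_orbitSum_baseWord (t : Fin (n + 1) ⊕ Fin (n - 3)) :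
    wordFunctional n (orbitSum (baseWord n t)) =
      Pi.single t (coeff (wordEquiv (baseWord n t)) (orbitSum (baseWord n t))) := by
  have happly (t' : Fin (n + 1) ⊕ Fin (n - 3)) : wordFunctional n (orbitSum (baseWord n t)) t' =
      coeff (wordEquiv (baseWord n t')) (orbitSum (baseWord n t)) := by
    obtain j | w := t'
    · rfl
    · have := NeZero.of_pos (Nat.zero_lt_of_lt (Nat.add_lt_of_lt_sub w.isLt))
      rw [wordFunctional_inr, Finset.sum_eq_single 0 (fun r _ hr => by
        rw [coeff_cubicWord_orbitSum_baseWord t _ hr, smul_zero]) (by simp), pow_zero, one_smul]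
      rfl
  ext t'
  obtain rfl | h := eq_or_ne t' t
  · rw [happly, Pi.single_eq_same]
  · rw [happly, coeff_baseWord_orbitSum_baseWord h, Pi.single_eq_of_ne h]

theorem surjective_wordFunctional_comp_semiInvariantProj :
    Function.Surjective (wordFunctional n ∘ₗ semiInvariantProj n) := by
  have hsingle (t : Fin (n + 1) ⊕ Fin (n - 3)) :
      Pi.single t 1 ∈ LinearMap.range (wordFunctional n ∘ₗ semiInvariantProj n) := by
    have hne : coeff (wordEquiv (baseWord n t)) (orbitSum (baseWord n t)) ≠ 0 := by
      rw [coeff_wordEquiv_orbitSum, Nat.cast_ne_zero]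
      exact Finset.card_ne_zero_of_mem (Finset.mem_filter_univ 1 |>.2 rfl)
    refine (Submodule.smul_mem_iff _ hne).1 ⟨orbitSum (baseWord n t), ?_⟩
    rw [LinearMap.comp_apply,
      semiInvariantProj_eq_self (isSemiInvariant_orbitSum (odd_baseWord t)),
      wordFunctional_orbitSum_baseWord, ← Pi.single_smul, smul_eq_mul, mul_one]
  refine LinearMap.range_eq_top.1 (eq_top_iff.2 ?_)
  rw [← (Pi.basisFun ℂ _).span_eq, Submodule.span_le]
  rintro _ ⟨t, rfl⟩
  simpa using hsingle t

end OrbitSums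

section Comparison

variable {n : ℕ}

variable (n) in
/-- The Dunkl map modulo the tensors that can come from polynomials transforming under `W(Bₙ)` by
`(ε, σ) ↦ ∏ i, ε i`, completed by explicit functionals on the space of these polynomials. -/
noncomputable def comparisonMap :
    MvPolynomial (Fin n ⊕ Fin n) ℂ →ₗ[ℂ]
      (((Fin n → Fin (2 * n + 1)) → ℂ) ⧸
        altSupported ℂ n {l : Fin (2 * n + 1) | Odd (l + 1 : ℕ)}) ×
      (Fin (n + 1) ⊕ Fin (n - 3) → ℂ) :=
  ((Submodule.mkQ _).comp (dunklMap ℂ n)).prod ((wordFunctional n).comp (semiInvariantProj n))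

theorem comparisonMap_eq_iff {f g : MvPolynomial (Fin n ⊕ Fin n) ℂ} :
    comparisonMap n f = comparisonMap n g ↔
      dunklMap ℂ n f - dunklMap ℂ n g ∈
          altSupported ℂ n {l : Fin (2 * n + 1) | Odd (l + 1 : ℕ)} ∧
        wordFunctional n (semiInvariantProj n f) = wordFunctional n (semiInvariantProj n g) := by
  rw [← Submodule.Quotient.eq]
  exact Prod.ext_iff

theorem surjective_comparisonMap : Function.Surjective (comparisonMap n) := by
  rintro ⟨u, v⟩
  obtain ⟨u, rfl⟩ := Submodule.mkQ_surjective _ u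
  obtain ⟨f, rfl⟩ := surjective_dunklMap (K := ℂ) u
  obtain ⟨g, rfl⟩ := surjective_wordFunctional_comp_semiInvariantProj v
  refine ⟨f + semiInvariantProj n (g - f), Prod.ext ?_ ?_⟩
  · refine (Submodule.Quotient.eq _).2 ?_
    simpa using (isSemiInvariant_semiInvariantProj (g - f)).dunklMap_mem_altSupported
  · change wordFunctional n (semiInvariantProj n (f + semiInvariantProj n (g - f))) = _
    rw [map_add, semiInvariantProj_eq_self (isSemiInvariant_semiInvariantProj _), ← map_add,
      add_sub_cancel]
    rfl

theorem diagIdeal_le_leadingForms_comparisonMap :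
    (diagIdeal n).restrictScalars ℂ ≤ leadingForms (comparisonMap n) := by
  refine fun f hf => mem_leadingForms.2 fun d => ?_
  obtain ⟨r, hr, hΦr⟩ := mem_leadingForms.1 (diagIdeal_le_leadingForms hf) d
  refine ⟨r - semiInvariantProj n r, sub_mem hr (semiInvariantProj_mem_degreeLT hr),
    comparisonMap_eq_iff.2 ⟨?_, ?_⟩⟩
  · rw [map_sub, hΦr, sub_sub_cancel_left]
    exact neg_mem (isSemiInvariant_semiInvariantProj r).dunklMap_mem_altSupported
  · rw [map_sub, semiInvariantProj_eq_self (isSemiInvariant_semiInvariantProj r), sub_self,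
      map_zero, wordFunctional_semiInvariantProj_of_mem_diagIdeal
        (homogeneousComponent_mem_diagIdeal hf d)]

end Comparison

theorem dim_diag_coinv_B6_general (n : ℕ) :
    (2 * n + 1) ^ n + (n - 3) ≤
      Module.finrank ℂ (MvPolynomial (Fin n ⊕ Fin n) ℂ ⧸ diagIdeal n) := by
  have hle : LinearMap.ker (Ideal.Quotient.mkₐ ℂ (diagIdeal n)).toLinearMap ≤
      leadingForms (comparisonMap n) := fun f hf =>
    diagIdeal_le_leadingForms_comparisonMap (Ideal.Quotient.eq_zero_iff_mem.1 hf)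
  have := finite_quotient_diagIdeal (n := n)
  have hcoinv := finrank_le_of_ker_le_leadingForms surjective_comparisonMap hle
  have htensor := Submodule.finrank_quotient_add_finrank
    (altSupported ℂ n {l : Fin (2 * n + 1) | Odd (l + 1 : ℕ)})
  have halt := finrank_altSupported_odd_add_le (K := ℂ) (n := n) 1
  simp only [Module.finrank_prod, Module.finrank_fintype_fun_eq_card, Fintype.card_sum,
    Fintype.card_fin, Fintype.card_pi, Finset.prod_const, Finset.card_univ,
    Nat.choose_succ_self_right] at hcoinv htensor halt
  omega

/-- For `n = 6`, `dim_ℂ R_W ≥ 13⁶ + 3` for the diagonal coinvariant ring of `W(B₆)`. -/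
theorem dim_diag_coinv_B6 :
    13 ^ 6 + 3 ≤ Module.finrank ℂ (MvPolynomial (Fin 6 ⊕ Fin 6) ℂ ⧸ diagIdeal 6) :=
  dim_diag_coinv_B6_general 6
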